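/- arXiv:2510.12046 — 2 statements merged into one kernel-verified Lean document; each statement's English description precedes it below -/
import Mathlib

section
/- For every w ∈ K(S_{n+1}), the descent sets satisfy Des_A(w) = { i+1 : i ∈ Des_B(φ_n(w)) } and DDes_A(w) = { i+1 : i ∈ DDes_B(φ_n(w)) }. -/
/-!
If `u = φ(w)`, then the word `0 :: u` has the same length as `w` and the same descent positions.
Since `Des_B` and `DDes_B` are read off from `0 :: u` (with the boundary convention `+∞` on the
left, as for `w`), this gives both equalities. Below, `m` and `|u|` are the lengths of `w` and `u`.

The claim is proved by induction on the recursive construction (`sameDes_of_phiRel`). At a global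
ascent or descent `p`, the recursive step appends to `u` the image of `w_{p+1} ⋯ w_m` under a
strictly increasing function, so descents inside this last block are preserved (`SameDes.map`).
At the junction (`SameDes.append`), the appended letters are all larger than `|u|` at a global
ascent and all smaller than `-|u|` at a global descent, while all letters of `0 :: u` have absolute
value at most `|u|`; hence the junction is a descent of `0 :: φ(w)` exactly when it is one of `w`.

The bound on absolute values is carried along the induction. At a global descent it requires the
last `m - p` letters of `w` to be at most `m - p`, for which `w` has to be standardized. The
induction hypothesis therefore includes the condition `∀ x ∈ w, rk w x = x` (`w` is its own
standardization), which passes to the prefix at a global ascent and to the standardized prefix at a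
global descent.
-/

namespace SepPaperFormal

noncomputable section

open Polynomial

def st (a : List ℤ) : List ℤ :=
  a.map (fun x => ((a.filter (fun y => decide (y < x))).length : ℤ) + 1)

def sts (a : List ℤ) : List ℤ :=
  a.map (fun x => x.sign * (((a.filter (fun y => decide (|y| < |x|))).length : ℤ) + 1))

def IsSignedPerm (w : List ℤ) : Prop :=
  (w.map Int.natAbs).Perm (List.range' 1 w.length)

def ContainsB (w u : List ℤ) : Prop := ∃ s : List ℤ, s.Sublist w ∧ sts s = u

def ContainsA (w u : List ℤ) : Prop := ∃ s : List ℤ, s.Sublist w ∧ st s = u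

def IsSepB (w : List ℤ) : Prop :=
  IsSignedPerm w ∧
    ¬ ContainsB w [-2, 1] ∧ ¬ ContainsB w [2, -1] ∧
    ¬ ContainsB w [3, 1, 4, 2] ∧ ¬ ContainsB w [2, 4, 1, 3] ∧
    ¬ ContainsB w [-3, -1, -4, -2] ∧ ¬ ContainsB w [-2, -4, -1, -3]

def IsSepA (w : List ℤ) : Prop :=
  IsSignedPerm w ∧ (∀ x ∈ w, 0 < x) ∧
    ¬ ContainsA w [3, 1, 4, 2] ∧ ¬ ContainsA w [2, 4, 1, 3]

def oplus (u v : List ℤ) : List ℤ :=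
  u ++ v.map (fun x => x + x.sign * (u.length : ℤ))

def ominus (u v : List ℤ) : List ℤ :=
  u.map (fun x => x + x.sign * (v.length : ℤ)) ++ v

def AllSameSign (l : List ℤ) : Prop := (∀ x ∈ l, 0 < x) ∨ (∀ x ∈ l, x < 0)

def OppSign (a b : List ℤ) : Prop := ∀ x ∈ a, ∀ y ∈ b, x * y < 0

-- blocks for statement 3
def blockOf (w : List ℤ) (q : List ℕ) (i : ℕ) : List ℤ :=
  (w.drop q[i]!).take (q[i+1]! - q[i]!)

def cutSeq (w : List ℤ) (cuts : List ℕ) : List ℕ := 0 :: (cuts ++ [w.length])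

def GoodDecomp (w : List ℤ) (cuts : List ℕ) : Prop :=
  List.Chain' (· < ·) (cutSeq w cuts) ∧
  w = List.foldl oplus (blockOf w (cutSeq w cuts) 0)
        ((List.range cuts.length).map (fun i => sts (blockOf w (cutSeq w cuts) (i + 1)))) ∧
  IsSepB (blockOf w (cutSeq w cuts) 0) ∧
  (∀ i, 1 ≤ i → i ≤ cuts.length → IsSepB (sts (blockOf w (cutSeq w cuts) i))) ∧
  (∀ j, j ≤ cuts.length → AllSameSign (blockOf w (cutSeq w cuts) j)) ∧
  (∀ i, 1 ≤ i → i ≤ cuts.length →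
    OppSign (blockOf w (cutSeq w cuts) (i - 1)) (blockOf w (cutSeq w cuts) i))

-- statement 4
inductive InC : List ℤ → Prop
  | one : InC [1]
  | negone : InC [-1]
  | dsum (u v : List ℤ) : InC u → InC v → InC (oplus u v)
  | ssum (u v : List ℤ) : InC u → InC v → AllSameSign (u ++ v) → InC (ominus u v)

-- the map φₙ as a relation
inductive PhiRel : List ℤ → List ℤ → Prop
  | base : PhiRel [1] []
  | gasc (w u : List ℤ) (p : ℕ) (hp1 : 1 ≤ p) (hp2 : p < w.length)
      (h : ∀ i j, i < p → p ≤ j → j < w.length → w[i]! < w[j]!)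
      (ih : PhiRel (w.take p) u) :
      PhiRel w (oplus u (st (w.drop p)))
  | gdes (w u : List ℤ) (p : ℕ) (hp1 : 1 ≤ p) (hp2 : p < w.length)
      (h : ∀ i j, i < p → p ≤ j → j < w.length → w[j]! < w[i]!)
      (ih : PhiRel (st (w.take p)) u) :
      PhiRel w (oplus u ((w.drop p).map (fun x => x - ((w.length - p : ℕ) : ℤ) - 1)))

-- the map ψₙ as a relation
inductive PsiRel : List ℤ → List ℤ → Prop
  | base : PsiRel [] [1]
  | pos (w u : List ℤ) (p : ℕ) (hp : p < w.length)
      (hdec : w = oplus (w.take p) (sts (w.drop p)))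
      (hsign : AllSameSign (w.drop p))
      (hlast : 0 < w[w.length - 1]!)
      (ih : PsiRel (w.take p) u) :
      PsiRel w (oplus u (sts (w.drop p)))
  | neg (w u : List ℤ) (p : ℕ) (hp : p < w.length)
      (hdec : w = oplus (w.take p) (sts (w.drop p)))
      (hsign : AllSameSign (w.drop p))
      (hlast : w[w.length - 1]! < 0)
      (ih : PsiRel (w.take p) u) :
      PsiRel w (ominus u ((sts (w.drop p)).map (fun x => x + ((w.length - p : ℕ) : ℤ) + 1)))

-- descent statistics
def DesB (w : List ℤ) : Finset ℕ :=
  (Finset.range w.length).filter (fun i => (if i = 0 then (0 : ℤ) else w[i-1]!) > w[i]!)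

def DDesB (w : List ℤ) : Finset ℕ :=
  (Finset.range w.length).filter (fun i =>
    (i = 0 ∨ (if i - 1 = 0 then (0 : ℤ) else w[i-2]!) > (if i = 0 then (0 : ℤ) else w[i-1]!)) ∧
    (if i = 0 then (0 : ℤ) else w[i-1]!) > w[i]!)

def DesA (w : List ℤ) : Finset ℕ :=
  (Finset.range w.length).filter (fun i => 1 ≤ i ∧ w[i-1]! > w[i]!)

def DDesA (w : List ℤ) : Finset ℕ :=
  (Finset.range w.length).filter (fun i => 1 ≤ i ∧
    (i = 1 ∨ w[i-2]! > w[i-1]!) ∧ w[i-1]! > w[i]!)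

-- inversions, negatives, negative sum pairs (0-based index sets)
def InvF (w : List ℤ) : Finset (ℕ × ℕ) :=
  (Finset.range w.length ×ˢ Finset.range w.length).filter
    (fun p => p.1 < p.2 ∧ w[p.2]! < w[p.1]!)

def NegF (w : List ℤ) : Finset ℕ :=
  (Finset.range w.length).filter (fun i => w[i]! < 0)

def NspF (w : List ℤ) : Finset (ℕ × ℕ) :=
  (Finset.range w.length ×ˢ Finset.range w.length).filter
    (fun p => p.1 < p.2 ∧ w[p.1]! + w[p.2]! < 0)

/-- Left weak order on `S_n` (combinatorial characterization). -/
def leS (u v : List ℤ) : Prop := InvF u ⊆ InvF v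

/-- Left weak order on `B_n` (combinatorial characterization). -/
def leB (u v : List ℤ) : Prop := InvF u ⊆ InvF v ∧ NegF u ⊆ NegF v ∧ NspF u ⊆ NspF v

/-- Coxeter length in type `B`. -/
def lenB (w : List ℤ) : ℕ := (NegF w).card + (InvF w).card + (NspF w).card

/-- Coxeter length in type `A`. -/
def lenS (w : List ℤ) : ℕ := (InvF w).card

def IsPermW (w : List ℤ) : Prop := IsSignedPerm w ∧ ∀ x ∈ w, 0 < x

/-- Rank generating function of the principal lower ideal `Λ_w^B`. -/
def FLamB (w : List ℤ) : Polynomial ℚ :=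
  ∑ᶠ u ∈ {u : List ℤ | u.length = w.length ∧ IsSignedPerm u ∧ leB u w},
    (X : Polynomial ℚ) ^ lenB u

/-- Rank generating function of the principal upper ideal `V_w^B`. -/
def FVB (w : List ℤ) : Polynomial ℚ :=
  ∑ᶠ u ∈ {u : List ℤ | u.length = w.length ∧ IsSignedPerm u ∧ leB w u},
    (X : Polynomial ℚ) ^ lenB u

/-- Rank generating function of the principal lower ideal `Λ_w^S`. -/
def FLamS (w : List ℤ) : Polynomial ℚ :=
  ∑ᶠ u ∈ {u : List ℤ | u.length = w.length ∧ IsPermW u ∧ leS u w},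
    (X : Polynomial ℚ) ^ lenS u

/-- Rank generating function of the principal upper ideal `V_w^S`. -/
def FVS (w : List ℤ) : Polynomial ℚ :=
  ∑ᶠ u ∈ {u : List ℤ | u.length = w.length ∧ IsPermW u ∧ leS w u},
    (X : Polynomial ℚ) ^ lenS u

/-- `[i] = 1 + q + ⋯ + q^{i-1}`. -/
def qint (i : ℕ) : Polynomial ℚ := ∑ j ∈ Finset.range i, (X : Polynomial ℚ) ^ j

/-- `[m]! = [1][2]⋯[m]`. -/
def qfact (m : ℕ) : Polynomial ℚ := ∏ i ∈ Finset.range m, qint (i + 1)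

-- separating trees
inductive STree where
  | leaf : STree
  | node : Bool → STree → STree → STree

def numLeaves : STree → ℕ
  | .leaf => 1
  | .node _ l r => numLeaves l + numLeaves r

def Decomp (w : List ℤ) (p : ℕ) : Prop :=
  (w = oplus (w.take p) (sts (w.drop p)) ∧ IsSepB (w.take p) ∧ IsSepB (sts (w.drop p)) ∧
    AllSameSign (w.drop p)) ∨
  (w = ominus (sts (w.take p)) (w.drop p) ∧ IsSepB (sts (w.take p)) ∧ IsSepB (w.drop p) ∧
    AllSameSign (w.drop p))

/-- `IsSepTree w T`: `T` is the (shape of the) separating tree of the separable signed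
permutation `w`, where internal nodes labeled `true` are `⊕`-nodes and those labeled
`false` are `⊖`-nodes, and the separating index is chosen largest possible. -/
inductive IsSepTree : List ℤ → STree → Prop
  | leaf (x : ℤ) : IsSepTree [x] .leaf
  | nodeA (w : List ℤ) (p : ℕ) (l r : STree)
      (hp1 : 1 ≤ p) (hp2 : p < w.length)
      (hmax : ∀ q, p < q → q < w.length → ¬ Decomp w q)
      (hdec : w = oplus (w.take p) (sts (w.drop p)))
      (h1 : IsSepB (w.take p)) (h2 : IsSepB (sts (w.drop p)))
      (hsgn : AllSameSign (w.drop p))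
      (hl : IsSepTree (w.take p) l) (hr : IsSepTree (sts (w.drop p)) r) :
      IsSepTree w (.node (decide (w[p-1]! < w[p]!)) l r)
  | nodeB (w : List ℤ) (p : ℕ) (l r : STree)
      (hp1 : 1 ≤ p) (hp2 : p < w.length)
      (hmax : ∀ q, p < q → q < w.length → ¬ Decomp w q)
      (hdec : w = ominus (sts (w.take p)) (w.drop p))
      (h1 : IsSepB (sts (w.take p))) (h2 : IsSepB (w.drop p))
      (hsgn : AllSameSign (w.drop p))
      (hl : IsSepTree (sts (w.take p)) l) (hr : IsSepTree (w.drop p) r) :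
      IsSepTree w (.node (decide (w[p-1]! < w[p]!)) l r)

/-- Multiset of leaf-counts `N(V)` over internal `⊕`-nodes `V` whose parent is a
`⊖`-node (the root, whose parent label is `none`, is excluded): the set `S⁺(w)`. -/
def plusNodes : STree → Option Bool → Multiset ℕ
  | .leaf, _ => 0
  | .node b l r, parent =>
      (if b = true ∧ parent = some false then ({numLeaves (.node b l r)} : Multiset ℕ) else 0)
        + plusNodes l (some b) + plusNodes r (some b)

/-- Multiset of leaf-counts `N(V)` over internal `⊖`-nodes `V` whose parent is a
`⊕`-node (root excluded): the set `S⁻(w)`. -/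
def minusNodes : STree → Option Bool → Multiset ℕ
  | .leaf, _ => 0
  | .node b l r, parent =>
      (if b = false ∧ parent = some true then ({numLeaves (.node b l r)} : Multiset ℕ) else 0)
        + minusNodes l (some b) + minusNodes r (some b)

/-- `∏_{m ∈ s} [m]!`. -/
def qfactProd (s : Multiset ℕ) : Polynomial ℚ := (s.map qfact).prod

/-- The value by which `st a` replaces the letter `x`: its rank among the letters of `a`. -/
def rk (a : List ℤ) (x : ℤ) : ℤ := (a.countP (fun y => decide (y < x)) : ℤ) + 1

lemma st_eq (a : List ℤ) : st a = a.map (rk a) := by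
  simp [st, rk, List.countP_eq_length_filter]

lemma one_le_rk (a : List ℤ) (x : ℤ) : 1 ≤ rk a x := by
  unfold rk; omega

lemma rk_mono (a : List ℤ) {x y : ℤ} (h : x ≤ y) : rk a x ≤ rk a y := by
  have : a.countP (fun z => decide (z < x)) ≤ a.countP (fun z => decide (z < y)) := by
    apply List.countP_mono_left
    intro z _ hz
    simp only [decide_eq_true_eq] at hz ⊢
    omega
  unfold rk
  omega

lemma rk_strict {a : List ℤ} {x y : ℤ} (hx : x ∈ a) (h : x < y) : rk a x < rk a y := by
  induction a with
  | nil => simp at hx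
  | cons b a ih =>
    have hm := rk_mono a h.le
    unfold rk at ih hm ⊢
    simp only [List.countP_cons, decide_eq_true_eq]
    rcases List.mem_cons.1 hx with rfl | hx
    · simp only [lt_self_iff_false, if_false, h, if_true]
      push_cast
      omega
    · have := ih hx
      split_ifs <;> push_cast <;> omega

lemma rk_lt_iff {a : List ℤ} {x y : ℤ} (hx : x ∈ a) :
    rk a x < rk a y ↔ x < y := by
  refine ⟨fun h => ?_, rk_strict hx⟩
  by_contra hc
  have := rk_mono a (not_lt.1 hc)
  omega

lemma rk_le {a : List ℤ} {x : ℤ} (hx : x ∈ a) : rk a x ≤ a.length := by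
  -- Compare with the rank of a letter exceeding `x`: `x` itself is not counted in `rk a x`.
  have h1 := rk_strict hx (lt_add_one x)
  have h2 : a.countP (fun z => decide (z < x + 1)) ≤ a.length := List.countP_le_length
  unfold rk at h1 ⊢
  omega

lemma rk_map_rk (a : List ℤ) (x : ℤ) : rk (a.map (rk a)) (rk a x) = rk a x := by
  conv_lhs => unfold rk
  conv_rhs => unfold rk
  rw [List.countP_map]
  congr 2
  apply List.countP_congr
  intro y hy
  have := rk_lt_iff (y := x) hy
  simpa [rk] using this

lemma rk_append (s t : List ℤ) (x : ℤ) : rk (s ++ t) x = rk s x + rk t x - 1 := by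
  unfold rk
  rw [List.countP_append]
  push_cast
  ring

lemma rk_eq_one {a : List ℤ} {x : ℤ} (h : ∀ y ∈ a, x ≤ y) : rk a x = 1 := by
  have : a.countP (fun z => decide (z < x)) = 0 := by
    rw [List.countP_eq_zero]
    intro y hy
    simpa using h y hy
  simp [rk, this]

/-- A permutation, in one-line notation, is its own standardization. -/
lemma rk_of_perm {w : List ℤ} (hw : IsSignedPerm w) (hpos : ∀ x ∈ w, 0 < x) :
    ∀ x ∈ w, rk w x = x := by
  have hcast : w = (w.map Int.natAbs).map (fun k : ℕ => (k : ℤ)) := by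
    rw [List.map_map]
    conv_lhs => rw [← List.map_id w]
    apply List.map_congr_left
    intro x hx
    have := hpos x hx
    simp only [id, Function.comp]
    omega
  have hp : w.Perm ((List.range' 1 w.length).map (fun k : ℕ => (k : ℤ))) := by
    conv_lhs => rw [hcast]
    exact hw.map _
  have hcount : ∀ m k : ℕ, k ≤ m →
      (List.range' 1 m).countP (fun j : ℕ => decide ((j : ℤ) < (k : ℤ) + 1)) = k := by
    intro m k hk
    obtain ⟨d, rfl⟩ := Nat.exists_eq_add_of_le hk
    rw [← List.range'_append_1, List.countP_append]
    rw [List.countP_eq_length.2, List.countP_eq_zero.2]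
    · simp
    · intro j hj
      simp only [List.mem_range'_1] at hj
      simp only [decide_eq_true_eq]
      omega
    · intro j hj
      simp only [List.mem_range'_1] at hj
      simp only [decide_eq_true_eq]
      omega
  intro x hx
  have hx' := hp.mem_iff.1 hx
  simp only [List.mem_map, List.mem_range'_1] at hx'
  obtain ⟨k, hk, rfl⟩ := hx'
  obtain ⟨k, rfl⟩ : ∃ l, k = l + 1 := ⟨k - 1, by omega⟩
  have := hcount w.length k (by omega)
  unfold rk
  rw [hp.countP_eq, List.countP_map]
  push_cast
  simp only [Function.comp_def, this]

/-- The words `a` and `b` have the same length and the same descent positions. -/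
def SameDes (a b : List ℤ) : Prop :=
  a.length = b.length ∧ ∀ i, i + 1 < a.length → (a[i + 1]! < a[i]! ↔ b[i + 1]! < b[i]!)

/-- Descents inside a block are preserved by a strictly increasing relabelling of the letters. -/
lemma SameDes.map {a : List ℤ} {f : ℤ → ℤ} (hf : ∀ x ∈ a, ∀ y ∈ a, f x < f y ↔ x < y) :
    SameDes a (a.map f) := by
  refine ⟨by simp, fun i hi => ?_⟩
  have h := hf a[i + 1] (List.getElem_mem _) a[i] (List.getElem_mem _)
  grind

lemma SameDes.symm {a b : List ℤ} (h : SameDes a b) : SameDes b a :=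
  ⟨h.1.symm, fun i hi => (h.2 i (by rw [h.1]; exact hi)).symm⟩

lemma SameDes.trans {a b c : List ℤ} (h : SameDes a b) (h' : SameDes b c) : SameDes a c :=
  ⟨h.1.trans h'.1, fun i hi => (h.2 i hi).trans (h'.2 i (by rw [← h.1]; exact hi))⟩

/-- Equality of descent positions passes to concatenations, provided that the two junctions are
of the same kind. As the junction is global in the application, the hypothesis is stated for all
pairs of letters across it. -/
lemma SameDes.append {a b a' b' : List ℤ} (h : SameDes a b) (h' : SameDes a' b')
    (hj : ((∀ x ∈ a, ∀ y ∈ a', x < y) ∧ ∀ x ∈ b, ∀ y ∈ b', x < y) ∨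
      ((∀ x ∈ a, ∀ y ∈ a', y < x) ∧ ∀ x ∈ b, ∀ y ∈ b', y < x)) :
    SameDes (a ++ a') (b ++ b') := by
  obtain ⟨h1, h2⟩ := h
  obtain ⟨h1', h2'⟩ := h'
  refine ⟨by simp [h1, h1'], fun i hi => ?_⟩
  rw [List.length_append] at hi
  rcases lt_trichotomy (i + 1) a.length with hlt | heq | hgt
  · have := h2 i hlt
    grind
  · have e1 : (a ++ a')[i]! = a[i]'(by omega) := by grind
    have e2 : (a ++ a')[i + 1]! = a'[0]'(by omega) := by grind
    have e3 : (b ++ b')[i]! = b[i]'(by omega) := by grind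
    have e4 : (b ++ b')[i + 1]! = b'[0]'(by omega) := by grind
    rw [e1, e2, e3, e4]
    rcases hj with ⟨ha, hb⟩ | ⟨ha, hb⟩
    · have := ha _ (List.getElem_mem (l := a) (n := i) (by omega)) _
        (List.getElem_mem (l := a') (n := 0) (by omega))
      have := hb _ (List.getElem_mem (l := b) (n := i) (by omega)) _
        (List.getElem_mem (l := b') (n := 0) (by omega))
      constructor <;> intro <;> omega
    · have := ha _ (List.getElem_mem (l := a) (n := i) (by omega)) _
        (List.getElem_mem (l := a') (n := 0) (by omega))
      have := hb _ (List.getElem_mem (l := b) (n := i) (by omega)) _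
        (List.getElem_mem (l := b') (n := 0) (by omega))
      constructor <;> intro <;> omega
  · have := h2' (i - a.length) (by omega)
    have e1 : (a ++ a')[i]! = a'[i - a.length]! := by grind
    have e2 : (a ++ a')[i + 1]! = a'[i - a.length + 1]! := by grind
    have e3 : (b ++ b')[i]! = b'[i - a.length]! := by grind
    have e4 : (b ++ b')[i + 1]! = b'[i - a.length + 1]! := by grind
    rw [e1, e2, e3, e4, this]

/-- Turns a relation between letters at positions before and from `p` on into one between the
letters of the prefix and of the suffix. -/
lemma forall_take_drop {w : List ℤ} {p : ℕ} {R : ℤ → ℤ → Prop}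
    (h : ∀ i j, i < p → p ≤ j → j < w.length → R w[i]! w[j]!) :
    ∀ x ∈ w.take p, ∀ y ∈ w.drop p, R x y := by
  intro x hx y hy
  obtain ⟨i, hi, rfl⟩ := List.getElem_of_mem hx
  obtain ⟨j, hj, rfl⟩ := List.getElem_of_mem hy
  simp only [List.length_take, List.length_drop] at hi hj
  have := h i (p + j) (by omega) (by omega) (by omega)
  rw [getElem!_pos w i (by omega), getElem!_pos w (p + j) (by omega)] at this
  simpa using this

/-- The inductive invariant: `0 :: φ(w)` has the descent positions of `w`, and the letters of
`φ(w)` have absolute value at most its length. -/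
lemma sameDes_of_phiRel {w u : List ℤ} (h : PhiRel w u) (hw : ∀ x ∈ w, rk w x = x) :
    SameDes w (0 :: u) ∧ ∀ x ∈ u, |x| ≤ u.length := by
  induction h with
  | base => exact ⟨⟨rfl, fun i hi => by simp at hi⟩, by simp⟩
  | gasc w u p hp1 hp2 h _ ih =>
    have hR := forall_take_drop (R := fun x y => x < y) h
    have hs : ∀ x ∈ w.take p, rk (w.take p) x = x := by
      intro x hx
      have h1 := hw x (List.mem_of_mem_take hx)
      rw [← List.take_append_drop p w, rk_append, rk_eq_one (a := w.drop p)
        (fun y hy => (hR x hx y hy).le)] at h1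
      omega
    obtain ⟨hd, hb⟩ := ih hs
    have hlen : ((w.drop p).length : ℤ) = w.length - p := by
      rw [List.length_drop]; omega
    have hul : u.length + 1 = p := by
      have := hd.1
      rw [List.length_take, List.length_cons] at this
      omega
    have hop : oplus u (st (w.drop p)) =
        u ++ (w.drop p).map (fun x => rk (w.drop p) x + u.length) := by
      rw [oplus, st_eq, List.map_map]
      congr 1
      apply List.map_congr_left
      intro x _
      have := one_le_rk (w.drop p) x
      simp [Int.sign_eq_one_of_pos (show 0 < rk (w.drop p) x by omega)]
    rw [hop]
    constructor
    · rw [← List.cons_append]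
      conv_lhs => rw [← List.take_append_drop p w]
      refine hd.append (SameDes.map fun x hx y hy => ?_) (Or.inl ⟨hR, ?_⟩)
      · rw [← rk_lt_iff hx]
        omega
      · intro x hx y hy
        obtain ⟨z, hz, rfl⟩ := List.mem_map.1 hy
        have h1 := one_le_rk (w.drop p) z
        rcases List.mem_cons.1 hx with rfl | hx
        · omega
        · have := (abs_le.1 (hb x hx)).2
          omega
    · intro x hx
      rw [List.length_append, List.length_map]
      push_cast
      rcases List.mem_append.1 hx with hx | hx
      · have := hb x hx
        omega
      · obtain ⟨z, hz, rfl⟩ := List.mem_map.1 hx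
        have h1 := one_le_rk (w.drop p) z
        have h2 := rk_le hz
        rw [abs_le]
        constructor <;> omega
  | gdes w u p hp1 hp2 h _ ih =>
    have hR := forall_take_drop (R := fun x y => y < x) h
    have hs : ∀ x ∈ st (w.take p), rk (st (w.take p)) x = x := by
      intro x hx
      rw [st_eq] at hx ⊢
      obtain ⟨z, -, rfl⟩ := List.mem_map.1 hx
      exact rk_map_rk _ z
    obtain ⟨hd, hb⟩ := ih hs
    have hd' : SameDes (w.take p) (0 :: u) := by
      refine SameDes.trans ?_ hd
      rw [st_eq]
      exact SameDes.map fun x hx y _ => rk_lt_iff hx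
    have hul : u.length + 1 = p := by
      have := hd'.1
      rw [List.length_take, List.length_cons] at this
      omega
    have hlen : (w.drop p).length = w.length - p := List.length_drop
    -- The letters after a global descent are the smallest ones, `1, …, m - p`.
    have ht : ∀ x ∈ w.drop p, 1 ≤ x ∧ x ≤ ((w.length - p : ℕ) : ℤ) := by
      intro x hx
      have h1 := hw x (List.mem_of_mem_drop hx)
      have h2 := one_le_rk w x
      refine ⟨by omega, ?_⟩
      rw [← List.take_append_drop p w, rk_append, rk_eq_one (a := w.take p)
        (fun y hy => (hR y hy x hx).le)] at h1
      have h3 := rk_le hx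
      omega
    have hop : oplus u ((w.drop p).map (fun x => x - ((w.length - p : ℕ) : ℤ) - 1)) =
        u ++ (w.drop p).map (fun x => x - ((w.length - p : ℕ) : ℤ) - 1 - u.length) := by
      rw [oplus, List.map_map]
      congr 1
      apply List.map_congr_left
      intro x hx
      have := ht x hx
      simp only [Function.comp]
      rw [Int.sign_eq_neg_one_of_neg (by omega)]
      ring
    rw [hop]
    constructor
    · rw [← List.cons_append]
      conv_lhs => rw [← List.take_append_drop p w]
      refine hd'.append (SameDes.map fun x hx y hy => ?_) (Or.inr ⟨hR, ?_⟩)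
      · omega
      · intro x hx y hy
        obtain ⟨z, hz, rfl⟩ := List.mem_map.1 hy
        have h1 := ht z hz
        rcases List.mem_cons.1 hx with rfl | hx
        · omega
        · have := (abs_le.1 (hb x hx)).1
          omega
    · intro x hx
      rw [List.length_append, List.length_map]
      push_cast
      rcases List.mem_append.1 hx with hx | hx
      · have := hb x hx
        omega
      · obtain ⟨z, hz, rfl⟩ := List.mem_map.1 hx
        have h1 := ht z hz
        rw [abs_le]
        constructor <;> omega

/-- For `w ∈ K(S_{n+1})`,
`Des_A(w) = {i+1 : i ∈ Des_B(φ_n(w))}` and `DDes_A(w) = {i+1 : i ∈ DDes_B(φ_n(w))}`. -/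
theorem descents_shift_under_phi (n : ℕ) (w u : List ℤ)
    (hw : w.length = n + 1) (hsep : IsSepA w) (hphi : PhiRel w u) :
    DesA w = (DesB u).image (fun i => i + 1) ∧
    DDesA w = (DDesB u).image (fun i => i + 1) := by
  obtain ⟨⟨hlen, hdes⟩, -⟩ := sameDes_of_phiRel hphi (rk_of_perm hsep.1 hsep.2.1)
  rw [List.length_cons] at hlen
  -- The convention `w_0 = 0` in `DesB` and `DDesB` amounts to prepending the letter `0`.
  have hzero : ∀ i, (if i = 0 then (0 : ℤ) else u[i - 1]!) = (0 :: u)[i]! := by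
    intro i
    cases i <;> simp
  have hsucc : ∀ i, u[i]! = (0 :: u)[i + 1]! := by
    intro i
    simp
  constructor
  · ext k
    simp only [DesA, DesB, Finset.mem_filter, Finset.mem_range, Finset.mem_image, gt_iff_lt]
    constructor
    · rintro ⟨h1, h2, h3⟩
      obtain ⟨i, rfl⟩ : ∃ i, k = i + 1 := ⟨k - 1, by omega⟩
      refine ⟨i, ⟨by omega, ?_⟩, rfl⟩
      rw [hzero, hsucc]
      exact (hdes i h1).1 h3
    · rintro ⟨i, ⟨h1, h2⟩, rfl⟩
      rw [hzero, hsucc] at h2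
      exact ⟨by omega, by omega, (hdes i (by omega)).2 h2⟩
  · -- Membership of a shifted index splits according to whether the left neighbour is `+∞`.
    have key : ∀ i, i < u.length → (((i + 1 = 1 ∨ w[i + 1 - 1]! < w[i + 1 - 2]!) ∧
        w[i + 1]! < w[i + 1 - 1]!) ↔
        ((i = 0 ∨ (if i = 0 then (0 : ℤ) else u[i - 1]!) <
          (if i - 1 = 0 then (0 : ℤ) else u[i - 2]!)) ∧
          u[i]! < (if i = 0 then (0 : ℤ) else u[i - 1]!))) := by
      intro i hi
      have h1 := hdes i (by omega)
      rw [hzero, hsucc i]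
      rcases i with _ | j
      · simpa using h1
      · have h2 := hdes j (by omega)
        have h3 := hzero j
        have e1 : j + 1 - 1 = j := by omega
        have e2 : j + 1 - 2 = j - 1 := by omega
        have e3 : j + 1 + 1 - 1 = j + 1 := by omega
        have e4 : j + 1 + 1 - 2 = j := by omega
        rw [e1, e2, e3, e4, h3, h1, h2]
        simp
    ext k
    simp only [DDesA, DDesB, Finset.mem_filter, Finset.mem_range, Finset.mem_image, gt_iff_lt]
    constructor
    · rintro ⟨h1, h2, h3⟩
      obtain ⟨i, rfl⟩ : ∃ i, k = i + 1 := ⟨k - 1, by omega⟩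
      exact ⟨i, ⟨by omega, (key i (by omega)).1 h3⟩, rfl⟩
    · rintro ⟨i, ⟨h1, h2⟩, rfl⟩
      exact ⟨by omega, by omega, (key i h1).2 h2⟩

end

end SepPaperFormal
end

section
/- For every nonnegative integer n, the descent polynomial of separable signed permutations equals the descent polynomial of separable permutations one size up: Σ_{w ∈ K(B_n)} t^{des_B(w)} = Σ_{w ∈ K(S_{n+1})} t^{des_A(w)}. -/
/-!
The bijection behind the equality is `u ↦ st (0 :: u)`: prepend `0` to the one-line notation of a
separable signed permutation and standardize. It preserves the number of descents because `DesB`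
compares the first entry with `0` and standardization preserves comparisons (`card_DesA_st`).

Avoiding `(-2)1` and `2(-1)` says that of two entries of opposite sign the later one is larger in
absolute value. The other four patterns are `3142` and `2413` on entries of one sign.

* The image is separable (`SepFunB.no_pat_cons`): an occurrence of `3142` or `2413` in `0 :: u`
  whose entries are not all of one sign violates the rule for opposite signs.
* The map is injective (`SepFunB.injOn`): `st (0 :: u)` records the signs of `u` and the relative
  order of its entries, and these determine how absolute values compare: same-sign entries through
  the entries themselves, opposite-sign entries through their positions.
* The map is surjective (`SepFunA.surjOn`): for a separable permutation `g`, this recipe defines a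
  relation `AbsLt` on positions, with `g i.succ - g 0` in the role of the `i`-th entry. It is total,
  and a 3-cycle would give an occurrence of `2413` or `3142` starting at `g 0`
  (`SepFunA.absLt_trans`). Ranks for this total order are the absolute values of a preimage.
-/

namespace SepPaperFormal

noncomputable section

open Polynomial

/-! ### Standardization on index functions -/

/-- The number of values of `f` strictly below the value `f i`. -/
def rnk {m : ℕ} (f : Fin m → ℤ) (i : Fin m) : ℕ :=
  (Finset.univ.filter (fun j => f j < f i)).card

theorem rnk_lt_iff {m : ℕ} (f : Fin m → ℤ) (i j : Fin m) : rnk f i < rnk f j ↔ f i < f j := by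
  constructor
  · intro h
    by_contra! hc
    refine absurd h (not_lt.2 (Finset.card_le_card fun k hk => ?_))
    simp only [Finset.mem_filter, Finset.mem_univ, true_and] at hk ⊢
    omega
  · intro h
    refine Finset.card_lt_card (Finset.ssubset_iff_of_subset (fun k hk => ?_) |>.2 ⟨i, ?_, ?_⟩)
    · simp only [Finset.mem_filter, Finset.mem_univ, true_and] at hk ⊢
      omega
    · simpa using h
    · simp

theorem rnk_congr {m : ℕ} {f g : Fin m → ℤ} (h : ∀ i j, f i < f j ↔ g i < g j) :
    rnk f = rnk g := by
  funext i
  simp only [rnk, h]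

theorem st_ofFn {m : ℕ} (f : Fin m → ℤ) :
    st (List.ofFn f) = List.ofFn (fun i => (rnk f i : ℤ) + 1) := by
  rw [st, List.map_ofFn]
  congr 1
  funext i
  have key : ∀ p : ℤ → Bool, ((List.ofFn f).filter p).length
      = (Finset.univ.filter (fun j => p (f j) = true)).card := by
    intro p
    rw [← List.countP_eq_length_filter, List.ofFn_eq_map, List.countP_map, Finset.card_def,
      Finset.filter_val, Fin.univ_def]
    simp [List.countP_eq_length_filter, Function.comp_def]
  simp [key, rnk]

/-- An injection of `Fin m` into `{1, …, m}` is its own standardization. -/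
theorem rnk_eq_self {m : ℕ} {f : Fin m → ℤ} (hinj : Function.Injective f)
    (hf : ∀ i, 1 ≤ f i ∧ f i ≤ m) (i : Fin m) : (rnk f i : ℤ) + 1 = f i := by
  have himg : Finset.univ.image f = Finset.Icc (1 : ℤ) m := by
    refine Finset.eq_of_subset_of_card_le (fun x hx => ?_) ?_
    · obtain ⟨j, -, rfl⟩ := Finset.mem_image.1 hx
      exact Finset.mem_Icc.2 (hf j)
    · rw [Finset.card_image_of_injective _ hinj]; simp
  have h2 : (Finset.univ.filter (fun j => f j < f i)).image f = Finset.Ico (1 : ℤ) (f i) := by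
    ext x
    simp only [Finset.mem_image, Finset.mem_filter, Finset.mem_univ, true_and, Finset.mem_Ico]
    constructor
    · rintro ⟨j, hj, rfl⟩
      exact ⟨(hf j).1, hj⟩
    · rintro ⟨h1, h3⟩
      have : x ∈ Finset.univ.image f := by
        rw [himg, Finset.mem_Icc]
        exact ⟨h1, by have := (hf i).2; omega⟩
      obtain ⟨j, -, rfl⟩ := Finset.mem_image.1 this
      exact ⟨j, h3, rfl⟩
  have h3 : rnk f i = (f i - 1).toNat := by
    rw [rnk, ← Finset.card_image_of_injective _ hinj, h2, Int.card_Ico]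
  have := (hf i).1
  omega

theorem isSignedPerm_ofFn {m : ℕ} (f : Fin m → ℤ) :
    IsSignedPerm (List.ofFn f) ↔
      Function.Injective (fun i => |f i|) ∧ ∀ i, 1 ≤ |f i| ∧ |f i| ≤ m := by
  have hinj : Function.Injective (fun i => |f i|) ↔ (List.ofFn (fun i => (f i).natAbs)).Nodup := by
    rw [List.nodup_ofFn]
    simp only [Function.Injective, Int.abs_eq_natAbs, Nat.cast_inj]
  rw [hinj, IsSignedPerm, List.map_ofFn, List.length_ofFn]
  simp only [Function.comp_def]
  constructor
  · intro h
    refine ⟨h.nodup_iff.2 List.nodup_range', fun i => ?_⟩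
    rw [Int.abs_eq_natAbs]
    have : (f i).natAbs ∈ List.range' 1 m := h.mem_iff.1 (List.mem_ofFn.2 ⟨i, rfl⟩)
    simp only [List.mem_range'_1] at this
    omega
  · rintro ⟨h1, h2⟩
    refine (List.subperm_of_subset h1 fun x hx => ?_).perm_of_length_le (by simp)
    obtain ⟨i, rfl⟩ := List.mem_ofFn.1 hx
    have := h2 i
    rw [Int.abs_eq_natAbs] at this
    simp only [List.mem_range'_1]
    omega

/-! ### Pattern containment in terms of index functions -/

theorem st_four_iff (a b c d : ℤ) :
    (st [a, b, c, d] = [3, 1, 4, 2] ↔ b < d ∧ d < a ∧ a < c) ∧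
    (st [a, b, c, d] = [2, 4, 1, 3] ↔ c < a ∧ a < d ∧ d < b) := by
  have mono : ∀ x y : ℤ, x ≤ y →
      (([a, b, c, d].filter (fun z => decide (z < x))).length : ℤ) ≤
        (([a, b, c, d].filter (fun z => decide (z < y))).length : ℤ) := by
    intro x y h
    exact_mod_cast (List.monotone_filter_right _ (by intro z; simp; omega)).length_le
  constructor <;> constructor
  · intro h
    simp only [st, List.map_cons, List.map_nil, List.cons.injEq] at h
    obtain ⟨h1, h2, h3, h4, -⟩ := h
    refine ⟨?_, ?_, ?_⟩ <;> (by_contra! hc; have := mono _ _ hc; omega)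
  · rintro ⟨h1, h2, h3⟩
    simp [st, List.filter, h1, h2, h3, h1.trans h2, h2.trans h3, (h1.trans h2).trans h3,
      h1.not_gt, h2.not_gt, h3.not_gt, (h1.trans h2).not_gt, (h2.trans h3).not_gt,
      ((h1.trans h2).trans h3).not_gt]
  · intro h
    simp only [st, List.map_cons, List.map_nil, List.cons.injEq] at h
    obtain ⟨h1, h2, h3, h4, -⟩ := h
    refine ⟨?_, ?_, ?_⟩ <;> (by_contra! hc; have := mono _ _ hc; omega)
  · rintro ⟨h1, h2, h3⟩
    simp [st, List.filter, h1, h2, h3, h1.trans h2, h2.trans h3, (h1.trans h2).trans h3,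
      h1.not_gt, h2.not_gt, h3.not_gt, (h1.trans h2).not_gt, (h2.trans h3).not_gt,
      ((h1.trans h2).trans h3).not_gt]

theorem sts_of_pos {l : List ℤ} (h : ∀ x ∈ l, 0 < x) : sts l = st l := by
  rw [sts, st]
  refine List.map_congr_left fun x hx => ?_
  rw [Int.sign_eq_one_of_pos (h x hx), one_mul, abs_of_pos (h x hx)]
  congr 3
  refine List.filter_congr fun y hy => ?_
  rw [abs_of_pos (h y hy)]

theorem sts_of_neg {l : List ℤ} (h : ∀ x ∈ l, x < 0) :
    sts l = (st (l.map (- ·))).map (- ·) := by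
  rw [sts, st, List.map_map, List.map_map]
  refine List.map_congr_left fun x hx => ?_
  simp only [Function.comp_def, List.filter_map, List.length_map]
  rw [Int.sign_eq_neg_one_of_neg (h x hx), abs_of_neg (h x hx), neg_one_mul]
  congr 4
  refine List.filter_congr fun y hy => ?_
  rw [abs_of_neg (h y hy)]

/-- Standardization preserves signs. -/
theorem sign_of_sts {l : List ℤ} {p : List ℤ} (h : sts l = p) :
    p.map Int.sign = l.map Int.sign := by
  subst h
  rw [sts, List.map_map]
  refine List.map_congr_left fun x hx => ?_
  have : Int.sign (((l.filter (fun y => decide (|y| < |x|))).length : ℤ) + 1) = 1 :=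
    Int.sign_eq_one_of_pos (by positivity)
  simp [Int.sign_mul, this]

theorem sts_two_iff (a b : ℤ) :
    (sts [a, b] = [-2, 1] ↔ a < 0 ∧ 0 < b ∧ |b| < |a|) ∧
    (sts [a, b] = [2, -1] ↔ 0 < a ∧ b < 0 ∧ |b| < |a|) := by
  constructor <;> constructor
  · intro h
    have hs := sign_of_sts h
    simp only [List.map_cons, List.map_nil, List.cons.injEq] at hs
    have ha : a < 0 := Int.sign_eq_neg_one_iff_neg.1 hs.1.symm
    have hb : 0 < b := Int.sign_eq_one_iff_pos.1 hs.2.1.symm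
    refine ⟨ha, hb, ?_⟩
    by_contra hc
    simp [sts, List.filter, hc, Int.sign_eq_neg_one_of_neg ha] at h
  · rintro ⟨h1, h2, h3⟩
    simp [sts, List.filter, h1, h2, h3, h3.not_gt, Int.sign_eq_neg_one_of_neg,
      Int.sign_eq_one_of_pos]
  · intro h
    have hs := sign_of_sts h
    simp only [List.map_cons, List.map_nil, List.cons.injEq] at hs
    have ha : 0 < a := Int.sign_eq_one_iff_pos.1 hs.1.symm
    have hb : b < 0 := Int.sign_eq_neg_one_iff_neg.1 hs.2.1.symm
    refine ⟨ha, hb, ?_⟩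
    by_contra hc
    simp [sts, List.filter, hc, Int.sign_eq_one_of_pos ha] at h
  · rintro ⟨h1, h2, h3⟩
    simp [sts, List.filter, h1, h2, h3, h3.not_gt, Int.sign_eq_neg_one_of_neg,
      Int.sign_eq_one_of_pos]

theorem sublist_finRange {m : ℕ} (s : List (Fin m)) :
    s.Sublist (List.finRange m) ↔ s.Pairwise (· < ·) := by
  refine ⟨fun h => (List.pairwise_lt_finRange m).sublist h, fun h => ?_⟩
  refine List.sublist_of_subperm_of_pairwise
    (List.subperm_of_subset (h.imp fun h => h.ne) fun x _ => List.mem_finRange x) h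
    (List.pairwise_lt_finRange m)

theorem sublist_ofFn {m : ℕ} (f : Fin m → ℤ) (s : List ℤ) :
    s.Sublist (List.ofFn f) ↔ ∃ t : List (Fin m), t.Pairwise (· < ·) ∧ s = t.map f := by
  rw [List.ofFn_eq_map, List.sublist_map_iff]
  simp only [sublist_finRange]

/-- The entries `a, b, c, d`, in this order, form an occurrence of `3142` or of `2413`. -/
def Pat (a b c d : ℤ) : Prop := (b < d ∧ d < a ∧ a < c) ∨ (c < a ∧ a < d ∧ d < b)

theorem length_two {α : Type*} {l : List α} (h : l.length = 2) : ∃ a b, l = [a, b] :=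
  List.length_eq_two.1 h

theorem length_four {α : Type*} {l : List α} (h : l.length = 4) : ∃ a b c d, l = [a, b, c, d] := by
  match l, h with
  | [a, b, c, d], _ => exact ⟨a, b, c, d, rfl⟩

theorem containsB_two_iff {m : ℕ} (f : Fin m → ℤ) :
    ContainsB (List.ofFn f) [-2, 1] ∨ ContainsB (List.ofFn f) [2, -1] ↔
      ∃ i j, i < j ∧ (f i < 0 ∧ 0 < f j ∨ 0 < f i ∧ f j < 0) ∧ |f j| < |f i| := by
  constructor
  · intro h
    have h' : ∃ s, s.Sublist (List.ofFn f) ∧ (sts s = [-2, 1] ∨ sts s = [2, -1]) := by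
      rcases h with ⟨s, hs, h⟩ | ⟨s, hs, h⟩
      exacts [⟨s, hs, Or.inl h⟩, ⟨s, hs, Or.inr h⟩]
    obtain ⟨s, hs, h⟩ := h'
    obtain ⟨t, ht, rfl⟩ := (sublist_ofFn f s).1 hs
    have hl : t.length = 2 := by
      rcases h with h | h <;> simpa [sts] using congrArg List.length h
    obtain ⟨i, j, rfl⟩ := length_two hl
    simp only [List.map_cons, List.map_nil, sts_two_iff] at h
    exact ⟨i, j, by simpa using ht, by tauto, by tauto⟩
  · rintro ⟨i, j, hij, h, h'⟩
    have hs : [f i, f j].Sublist (List.ofFn f) :=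
      (sublist_ofFn f _).2 ⟨[i, j], by simpa using hij, rfl⟩
    rcases h with h | h
    · exact Or.inl ⟨_, hs, (sts_two_iff _ _).1.2 ⟨h.1, h.2, h'⟩⟩
    · exact Or.inr ⟨_, hs, (sts_two_iff _ _).2.2 ⟨h.1, h.2, h'⟩⟩

theorem sts_four_iff (a b c d : ℤ) :
    (sts [a, b, c, d] = [3, 1, 4, 2] ∨ sts [a, b, c, d] = [2, 4, 1, 3] ∨
      sts [a, b, c, d] = [-3, -1, -4, -2] ∨ sts [a, b, c, d] = [-2, -4, -1, -3]) ↔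
    ((0 < a ∧ 0 < b ∧ 0 < c ∧ 0 < d) ∨ (a < 0 ∧ b < 0 ∧ c < 0 ∧ d < 0)) ∧ Pat a b c d := by
  have hpos : (0 < a ∧ 0 < b ∧ 0 < c ∧ 0 < d) → sts [a, b, c, d] = st [a, b, c, d] :=
    fun h => sts_of_pos (by simpa using h)
  have hneg : (a < 0 ∧ b < 0 ∧ c < 0 ∧ d < 0) →
      sts [a, b, c, d] = (st [-a, -b, -c, -d]).map (- ·) :=
    fun h => sts_of_neg (by simpa using h)
  have hmap : ∀ (l : List ℤ) (p q r s : ℤ),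
      l.map (- ·) = [-p, -q, -r, -s] ↔ l = [p, q, r, s] := by
    intro l p q r s
    exact (List.map_injective_iff.2 neg_injective).eq_iff (b := [p, q, r, s])
  have hs : ∀ p q r s : ℤ, sts [a, b, c, d] = [p, q, r, s] →
      p.sign = a.sign ∧ q.sign = b.sign ∧ r.sign = c.sign ∧ s.sign = d.sign := by
    intro p q r s h
    simpa using sign_of_sts h
  constructor
  · rintro (h | h | h | h)
    · have h' : 0 < a ∧ 0 < b ∧ 0 < c ∧ 0 < d := by
        obtain ⟨h1, h2, h3, h4⟩ := hs _ _ _ _ h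
        exact ⟨Int.sign_eq_one_iff_pos.1 h1.symm, Int.sign_eq_one_iff_pos.1 h2.symm,
          Int.sign_eq_one_iff_pos.1 h3.symm, Int.sign_eq_one_iff_pos.1 h4.symm⟩
      rw [hpos h', (st_four_iff _ _ _ _).1] at h
      exact ⟨Or.inl h', Or.inl h⟩
    · have h' : 0 < a ∧ 0 < b ∧ 0 < c ∧ 0 < d := by
        obtain ⟨h1, h2, h3, h4⟩ := hs _ _ _ _ h
        exact ⟨Int.sign_eq_one_iff_pos.1 h1.symm, Int.sign_eq_one_iff_pos.1 h2.symm,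
          Int.sign_eq_one_iff_pos.1 h3.symm, Int.sign_eq_one_iff_pos.1 h4.symm⟩
      rw [hpos h', (st_four_iff _ _ _ _).2] at h
      exact ⟨Or.inl h', Or.inr h⟩
    · have h' : a < 0 ∧ b < 0 ∧ c < 0 ∧ d < 0 := by
        obtain ⟨h1, h2, h3, h4⟩ := hs _ _ _ _ h
        exact ⟨Int.sign_eq_neg_one_iff_neg.1 h1.symm, Int.sign_eq_neg_one_iff_neg.1 h2.symm,
          Int.sign_eq_neg_one_iff_neg.1 h3.symm, Int.sign_eq_neg_one_iff_neg.1 h4.symm⟩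
      rw [hneg h', hmap, (st_four_iff _ _ _ _).1] at h
      exact ⟨Or.inr h', Or.inr (by omega)⟩
    · have h' : a < 0 ∧ b < 0 ∧ c < 0 ∧ d < 0 := by
        obtain ⟨h1, h2, h3, h4⟩ := hs _ _ _ _ h
        exact ⟨Int.sign_eq_neg_one_iff_neg.1 h1.symm, Int.sign_eq_neg_one_iff_neg.1 h2.symm,
          Int.sign_eq_neg_one_iff_neg.1 h3.symm, Int.sign_eq_neg_one_iff_neg.1 h4.symm⟩
      rw [hneg h', hmap, (st_four_iff _ _ _ _).2] at h
      exact ⟨Or.inr h', Or.inl (by omega)⟩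
  · rintro ⟨h | h, hp⟩
    · rw [hpos h, (st_four_iff _ _ _ _).1, (st_four_iff _ _ _ _).2]
      exact hp.elim Or.inl fun h => Or.inr (Or.inl h)
    · rw [hneg h, hmap, hmap, (st_four_iff _ _ _ _).1, (st_four_iff _ _ _ _).2]
      unfold Pat at hp
      omega

theorem containsB_four_iff {m : ℕ} (f : Fin m → ℤ) :
    (ContainsB (List.ofFn f) [3, 1, 4, 2] ∨ ContainsB (List.ofFn f) [2, 4, 1, 3] ∨
      ContainsB (List.ofFn f) [-3, -1, -4, -2] ∨ ContainsB (List.ofFn f) [-2, -4, -1, -3]) ↔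
      ∃ i j k l, i < j ∧ j < k ∧ k < l ∧
        ((0 < f i ∧ 0 < f j ∧ 0 < f k ∧ 0 < f l) ∨ (f i < 0 ∧ f j < 0 ∧ f k < 0 ∧ f l < 0)) ∧
        Pat (f i) (f j) (f k) (f l) := by
  simp only [ContainsB, ← exists_or, ← and_or_left]
  constructor
  · rintro ⟨s, hs, h⟩
    obtain ⟨t, ht, rfl⟩ := (sublist_ofFn f s).1 hs
    have hl : t.length = 4 := by
      rcases h with h | h | h | h <;> simpa [sts] using congrArg List.length h
    obtain ⟨i, j, k, l, rfl⟩ := length_four hl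
    simp only [List.map_cons, List.map_nil, sts_four_iff] at h
    simp only [List.pairwise_cons, List.mem_cons, List.not_mem_nil, or_false] at ht
    exact ⟨i, j, k, l, ht.1 j (by simp), ht.2.1 k (by simp), ht.2.2.1 l (by simp), h⟩
  · rintro ⟨i, j, k, l, h1, h2, h3, h⟩
    refine ⟨[f i, f j, f k, f l], (sublist_ofFn f _).2 ⟨[i, j, k, l], ?_, rfl⟩,
      (sts_four_iff _ _ _ _).2 h⟩
    simp
    omega

theorem containsA_four_iff {m : ℕ} (f : Fin m → ℤ) :
    (ContainsA (List.ofFn f) [3, 1, 4, 2] ∨ ContainsA (List.ofFn f) [2, 4, 1, 3]) ↔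
      ∃ i j k l, i < j ∧ j < k ∧ k < l ∧ Pat (f i) (f j) (f k) (f l) := by
  simp only [ContainsA, ← exists_or, ← and_or_left]
  constructor
  · rintro ⟨s, hs, h⟩
    obtain ⟨t, ht, rfl⟩ := (sublist_ofFn f s).1 hs
    have hl : t.length = 4 := by
      rcases h with h | h <;> simpa [st] using congrArg List.length h
    obtain ⟨i, j, k, l, rfl⟩ := length_four hl
    simp only [List.map_cons, List.map_nil, st_four_iff] at h
    simp only [List.pairwise_cons, List.mem_cons, List.not_mem_nil, or_false] at ht
    exact ⟨i, j, k, l, ht.1 j (by simp), ht.2.1 k (by simp), ht.2.2.1 l (by simp), h⟩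
  · rintro ⟨i, j, k, l, h1, h2, h3, h⟩
    refine ⟨[f i, f j, f k, f l], (sublist_ofFn f _).2 ⟨[i, j, k, l], ?_, rfl⟩, ?_⟩
    · simp
      omega
    · rw [(st_four_iff _ _ _ _).1, (st_four_iff _ _ _ _).2]
      exact h

/-- Separability of the signed permutation with entries `f`: its absolute values form a
permutation, entries of opposite sign increase in absolute value, and no four entries of the same
sign form `3142` or `2413` (a pair of patterns exchanged by negating all entries). -/
structure SepFunB {m : ℕ} (f : Fin m → ℤ) : Prop where
  inj : Function.Injective (fun i => |f i|)
  bound : ∀ i, 1 ≤ |f i| ∧ |f i| ≤ m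
  sign_law : ∀ i j, i < j → (f i < 0 ∧ 0 < f j ∨ 0 < f i ∧ f j < 0) → |f i| < |f j|
  no_pat : ∀ i j k l, i < j → j < k → k < l →
    ((0 < f i ∧ 0 < f j ∧ 0 < f k ∧ 0 < f l) ∨ (f i < 0 ∧ f j < 0 ∧ f k < 0 ∧ f l < 0)) →
    ¬ Pat (f i) (f j) (f k) (f l)

/-- Separability of the permutation with entries `f`. -/
structure SepFunA {m : ℕ} (f : Fin m → ℤ) : Prop where
  inj : Function.Injective f
  bound : ∀ i, 1 ≤ f i ∧ f i ≤ m
  no_pat : ∀ i j k l, i < j → j < k → k < l → ¬ Pat (f i) (f j) (f k) (f l)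

theorem isSepB_ofFn {m : ℕ} (f : Fin m → ℤ) : IsSepB (List.ofFn f) ↔ SepFunB f := by
  have h2 := containsB_two_iff f
  have h4 := containsB_four_iff f
  have h : IsSepB (List.ofFn f) ↔ IsSignedPerm (List.ofFn f) ∧
      ¬ (ContainsB (List.ofFn f) [-2, 1] ∨ ContainsB (List.ofFn f) [2, -1]) ∧
      ¬ (ContainsB (List.ofFn f) [3, 1, 4, 2] ∨ ContainsB (List.ofFn f) [2, 4, 1, 3] ∨
        ContainsB (List.ofFn f) [-3, -1, -4, -2] ∨ ContainsB (List.ofFn f) [-2, -4, -1, -3]) := by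
    simp only [IsSepB, not_or, and_assoc]
  rw [h, h2, h4, isSignedPerm_ofFn]
  push Not
  constructor
  · rintro ⟨⟨h1, h2⟩, h3, h4⟩
    refine ⟨h1, h2, fun i j hij hs => lt_of_le_of_ne (h3 i j hij hs) fun he => ?_, h4⟩
    exact hij.ne (h1 he)
  · rintro ⟨h1, h2, h3, h4⟩
    exact ⟨⟨h1, h2⟩, fun i j hij hs => (h3 i j hij hs).le, h4⟩

theorem isSepA_ofFn {m : ℕ} (f : Fin m → ℤ) : IsSepA (List.ofFn f) ↔ SepFunA f := by
  have h : IsSepA (List.ofFn f) ↔ (IsSignedPerm (List.ofFn f) ∧ ∀ i, 0 < f i) ∧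
      ¬ (ContainsA (List.ofFn f) [3, 1, 4, 2] ∨ ContainsA (List.ofFn f) [2, 4, 1, 3]) := by
    rw [IsSepA, List.forall_mem_ofFn_iff]; tauto
  rw [h, containsA_four_iff, isSignedPerm_ofFn]
  push Not
  constructor
  · rintro ⟨⟨⟨h1, h2⟩, h3⟩, h4⟩
    simp only [abs_of_pos (h3 _)] at h1 h2
    exact ⟨h1, h2, h4⟩
  · rintro ⟨h1, h2, h4⟩
    have h3 : ∀ i, 0 < f i := fun i => (h2 i).1
    simp only [abs_of_pos (h3 _)]
    exact ⟨⟨⟨h1, h2⟩, h3⟩, h4⟩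

/-! ### Prepending a zero -/

theorem SepFunB.ne_zero {m : ℕ} {f : Fin m → ℤ} (hf : SepFunB f) (i : Fin m) : f i ≠ 0 :=
  abs_pos.1 (by have := (hf.bound i).1; omega)

theorem SepFunB.cons_inj {m : ℕ} {f : Fin m → ℤ} (hf : SepFunB f) :
    Function.Injective (Fin.cons 0 f : Fin (m + 1) → ℤ) := by
  rw [Fin.cons_injective_iff]
  exact ⟨fun ⟨i, hi⟩ => hf.ne_zero i hi, fun i j h => hf.inj (congrArg abs h)⟩

/-- A pattern in `0, f 0, f 1, …` is either monochromatic, hence excluded, or contains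
entries `x`, `y` of opposite signs, in this order, violating `|x| < |y|`. -/
theorem SepFunB.no_pat_cons {m : ℕ} {f : Fin m → ℤ} (hf : SepFunB f)
    (i j k l : Fin (m + 1)) (hij : i < j) (hjk : j < k) (hkl : k < l) :
    ¬ Pat ((Fin.cons 0 f : Fin (m + 1) → ℤ) i) ((Fin.cons 0 f : Fin (m + 1) → ℤ) j)
      ((Fin.cons 0 f : Fin (m + 1) → ℤ) k) ((Fin.cons 0 f : Fin (m + 1) → ℤ) l) := by
  have law : ∀ p q : Fin m, p < q →
      (f p < 0 → 0 < f q → -f p < f q) ∧ (0 < f p → f q < 0 → f p < - f q) := by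
    intro p q hpq
    refine ⟨fun h1 h2 => ?_, fun h1 h2 => ?_⟩
    · have := hf.sign_law p q hpq (Or.inl ⟨h1, h2⟩)
      rwa [abs_of_neg h1, abs_of_pos h2] at this
    · have := hf.sign_law p q hpq (Or.inr ⟨h1, h2⟩)
      rwa [abs_of_pos h1, abs_of_neg h2] at this
  obtain ⟨j, rfl⟩ := Fin.exists_succ_eq.2 (Fin.ne_zero_of_lt hij)
  obtain ⟨k, rfl⟩ := Fin.exists_succ_eq.2 (Fin.ne_zero_of_lt hjk)
  obtain ⟨l, rfl⟩ := Fin.exists_succ_eq.2 (Fin.ne_zero_of_lt hkl)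
  rw [Fin.succ_lt_succ_iff] at hjk hkl
  have h1 := law j k hjk
  have h2 := law k l hkl
  have h3 := law j l (hjk.trans hkl)
  have nj := hf.ne_zero j
  have nk := hf.ne_zero k
  have nl := hf.ne_zero l
  simp only [Fin.cons_succ]
  induction i using Fin.cases with
  | zero =>
    rw [Fin.cons_zero]
    unfold Pat
    omega
  | succ i =>
    rw [Fin.succ_lt_succ_iff] at hij
    rw [Fin.cons_succ]
    have h4 := law i j hij
    have h5 := law i k (hij.trans hjk)
    have h6 := law i l ((hij.trans hjk).trans hkl)
    have ni := hf.ne_zero i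
    have h7 := hf.no_pat i j k l hij hjk hkl
    unfold Pat at h7 ⊢
    omega

/-- The standardization of `0, f 0, f 1, …` is a separable permutation. -/
theorem SepFunB.mapsTo {m : ℕ} {f : Fin m → ℤ} (hf : SepFunB f) :
    SepFunA (fun i => (rnk (Fin.cons 0 f : Fin (m + 1) → ℤ) i : ℤ) + 1) := by
  have hlt : ∀ i j, ((rnk (Fin.cons 0 f : Fin (m + 1) → ℤ) i : ℤ) + 1 <
      (rnk (Fin.cons 0 f : Fin (m + 1) → ℤ) j : ℤ) + 1) ↔
      (Fin.cons 0 f : Fin (m + 1) → ℤ) i < (Fin.cons 0 f : Fin (m + 1) → ℤ) j := by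
    intro i j
    rw [← rnk_lt_iff (Fin.cons 0 f : Fin (m + 1) → ℤ)]
    omega
  refine ⟨fun i j h => hf.cons_inj ?_, fun i => ⟨by omega, ?_⟩, fun i j k l hij hjk hkl hp => ?_⟩
  · refine le_antisymm ?_ ?_ <;> rw [← not_lt, ← hlt] <;> exact not_lt.2 (by simp_all)
  · have : rnk (Fin.cons 0 f : Fin (m + 1) → ℤ) i < (Finset.univ : Finset (Fin (m + 1))).card :=
      Finset.card_lt_card (Finset.filter_ssubset.2 ⟨i, by simp, by simp⟩)
    rw [Finset.card_univ, Fintype.card_fin] at this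
    exact_mod_cast this
  · simp only [Pat, hlt] at hp
    exact hf.no_pat_cons i j k l hij hjk hkl hp

/-- The order of absolute values that a signed permutation must have if its entries compare with
`0` and with each other as the `s i` do: same-sign entries compare as dictated by `s`, and
opposite-sign entries compare by position. -/
def AbsLt {m : ℕ} (s : Fin m → ℤ) (i j : Fin m) : Prop :=
  (0 < s i ∧ 0 < s j ∧ s i < s j) ∨ (s i < 0 ∧ s j < 0 ∧ s j < s i) ∨
    (i < j ∧ (s i < 0 ∧ 0 < s j ∨ 0 < s i ∧ s j < 0))

/-- The order of absolute values of a separable signed permutation is the one forced by its signs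
and the relative order of its entries. -/
theorem SepFunB.abs_lt_iff {m : ℕ} {f : Fin m → ℤ} (hf : SepFunB f) (i j : Fin m) :
    |f i| < |f j| ↔ AbsLt f i j := by
  have a1 := hf.sign_law i j
  have a2 := hf.sign_law j i
  have e : i = j → f i = f j := congrArg f
  unfold AbsLt
  rcases lt_or_gt_of_ne (hf.ne_zero i) with h1 | h1 <;>
    rcases lt_or_gt_of_ne (hf.ne_zero j) with h2 | h2 <;>
    simp only [abs_of_neg, abs_of_pos, h1, h2, h1.not_gt, h2.not_gt] at a1 a2 ⊢ <;>
    simp only [true_and, and_true, false_and, and_false, or_false, false_or, false_imp_iff,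
      forall_const, or_self] at a1 a2 ⊢ <;>
    omega

/-- A separable signed permutation is determined by how its entries compare with each other and
with `0`, since this determines the order of the absolute values. -/
theorem SepFunB.injOn {m : ℕ} {f g : Fin m → ℤ} (hf : SepFunB f) (hg : SepFunB g)
    (h : rnk (Fin.cons 0 f : Fin (m + 1) → ℤ) = rnk (Fin.cons 0 g : Fin (m + 1) → ℤ)) :
    f = g := by
  have hlt : ∀ i j, (Fin.cons 0 f : Fin (m + 1) → ℤ) i < (Fin.cons 0 f : Fin (m + 1) → ℤ) j ↔
      (Fin.cons 0 g : Fin (m + 1) → ℤ) i < (Fin.cons 0 g : Fin (m + 1) → ℤ) j := by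
    intro i j
    rw [← rnk_lt_iff, h, rnk_lt_iff]
  have hpos : ∀ i, 0 < f i ↔ 0 < g i := fun i => by simpa using hlt 0 i.succ
  have hneg : ∀ i, f i < 0 ↔ g i < 0 := fun i => by simpa using hlt i.succ 0
  have hfg : ∀ i j, f i < f j ↔ g i < g j := fun i j => by simpa using hlt i.succ j.succ
  have habs : ∀ i j, |f i| < |f j| ↔ |g i| < |g j| := by
    intro i j
    rw [hf.abs_lt_iff, hg.abs_lt_iff]
    simp only [AbsLt, hpos, hneg, hfg]
  have h1 := rnk_congr (f := fun i => |f i|) (g := fun i => |g i|) habs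
  funext i
  have h2 := rnk_eq_self hf.inj hf.bound i
  have h3 := rnk_eq_self hg.inj hg.bound i
  rw [h1, h3] at h2
  have := hpos i
  have := hneg i
  have := hf.ne_zero i
  simp only [Int.abs_eq_natAbs] at h2
  omega

/-! ### Recovering the signed permutation -/

/-- A 3-cycle of `AbsLt` involves both signs, and together with the first entry `g 0` it would be an
occurrence of `2413` or `3142`. -/
theorem SepFunA.absLt_trans {m : ℕ} {g : Fin (m + 1) → ℤ} (hg : SepFunA g) {i j k : Fin m}
    (hij : AbsLt (fun i => g i.succ - g 0) i j) (hjk : AbsLt (fun i => g i.succ - g 0) j k) :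
    AbsLt (fun i => g i.succ - g 0) i k := by
  have np : ∀ a b c : Fin m, a < b → b < c → ¬ Pat (g 0) (g a.succ) (g b.succ) (g c.succ) :=
    fun a b c hab hbc => hg.no_pat 0 a.succ b.succ c.succ (Fin.succ_pos a)
      (Fin.succ_lt_succ_iff.2 hab) (Fin.succ_lt_succ_iff.2 hbc)
  have p1 := np j k i
  have p2 := np k i j
  have p3 := np i j k
  have e : i = k → g i.succ = g k.succ := by rintro rfl; rfl
  have n1 : g k.succ = g 0 → False := fun h => Fin.succ_ne_zero k (hg.inj h)
  have n2 : g i.succ = g k.succ → i = k := fun h => Fin.succ_injective _ (hg.inj h)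
  unfold AbsLt Pat at *
  beta_reduce at *
  generalize g i.succ = x, g j.succ = y, g k.succ = z, g 0 = o at *
  rcases hij with hij | hij | ⟨hij, h | h⟩ <;>
    rcases hjk with hjk | hjk | ⟨hjk, h' | h'⟩ <;> omega

/-- Every separable permutation arises: take as signs those of `g i.succ - g 0`, and as absolute
values the ranks for the total order `AbsLt`. -/
theorem SepFunA.surjOn {m : ℕ} {g : Fin (m + 1) → ℤ} (hg : SepFunA g) :
    ∃ f : Fin m → ℤ, SepFunB f ∧
      (fun i => (rnk (Fin.cons 0 f : Fin (m + 1) → ℤ) i : ℤ) + 1) = g := by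
  classical
  set s : Fin m → ℤ := fun i => g i.succ - g 0 with hs
  have s0 : ∀ i, s i ≠ 0 := fun i h => by
    have := hg.inj (sub_eq_zero.1 h)
    exact Fin.succ_ne_zero i this
  have sinj : ∀ i j, s i = s j → i = j := fun i j h => by
    have : g i.succ = g j.succ := by simp only [hs] at h; omega
    exact Fin.succ_injective _ (hg.inj this)
  have irr : ∀ i, ¬ AbsLt s i i := fun i => by unfold AbsLt; omega
  have tri : ∀ i j, AbsLt s i j ∨ i = j ∨ AbsLt s j i := by
    intro i j
    have := s0 i
    have := s0 j
    have := sinj i j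
    unfold AbsLt
    omega
  let N : Fin m → ℕ := fun i => (Finset.univ.filter (fun j => AbsLt s j i)).card
  have Nmono : ∀ i j, AbsLt s i j → N i < N j := by
    intro i j h
    refine Finset.card_lt_card (Finset.ssubset_iff_of_subset (fun k hk => ?_) |>.2 ⟨i, ?_, ?_⟩)
    · simp only [Finset.mem_filter, Finset.mem_univ, true_and] at hk ⊢
      exact hg.absLt_trans hk h
    · simpa using h
    · rw [Finset.mem_filter]
      exact fun h => irr i h.2
  have Niff : ∀ i j, AbsLt s i j ↔ N i < N j := by
    refine fun i j => ⟨Nmono i j, fun h => ?_⟩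
    rcases tri i j with h' | rfl | h'
    · exact h'
    · omega
    · have := Nmono j i h'
      omega
  have Nlt : ∀ i, N i < m := by
    intro i
    have : N i < (Finset.univ : Finset (Fin m)).card :=
      Finset.card_lt_card (Finset.filter_ssubset.2 ⟨i, Finset.mem_univ i, irr i⟩)
    rwa [Finset.card_univ, Fintype.card_fin] at this
  let f : Fin m → ℤ := fun i => (s i).sign * ((N i : ℤ) + 1)
  have fpos : ∀ i, 0 < s i → f i = N i + 1 := fun i h => by
    show (s i).sign * ((N i : ℤ) + 1) = _
    rw [Int.sign_eq_one_of_pos h, one_mul]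
  have fneg : ∀ i, s i < 0 → f i = -(N i + 1) := fun i h => by
    show (s i).sign * ((N i : ℤ) + 1) = _
    rw [Int.sign_eq_neg_one_of_neg h, neg_one_mul]
  have fabs : ∀ i, |f i| = N i + 1 := fun i => by
    rcases lt_or_gt_of_ne (s0 i) with h | h
    · rw [fneg i h, abs_neg, abs_of_nonneg (by omega)]
    · rw [fpos i h, abs_of_nonneg (by omega)]
  have fs : ∀ i, (0 < s i ∧ f i = N i + 1) ∨ (s i < 0 ∧ f i = -(N i + 1)) := fun i => by
    rcases lt_or_gt_of_ne (s0 i) with h | h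
    · exact Or.inr ⟨h, fneg i h⟩
    · exact Or.inl ⟨h, fpos i h⟩
  have flt : ∀ i j, f i < f j ↔ s i < s j := by
    intro i j
    have h1 := Niff i j
    have h2 := Niff j i
    have h3 := fs i
    have h4 := fs j
    unfold AbsLt at h1 h2
    omega
  have hlt : ∀ i j, (Fin.cons 0 f : Fin (m + 1) → ℤ) i < (Fin.cons 0 f : Fin (m + 1) → ℤ) j ↔
      g i < g j := by
    intro i j
    induction i using Fin.cases with
    | zero =>
      induction j using Fin.cases with
      | zero => simp
      | succ j =>
        have h4 := fs j
        simp only [Fin.cons_zero, Fin.cons_succ, hs] at *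
        omega
    | succ i =>
      have h3 := fs i
      induction j using Fin.cases with
      | zero =>
        simp only [Fin.cons_zero, Fin.cons_succ, hs] at *
        omega
      | succ j =>
        rw [Fin.cons_succ, Fin.cons_succ, flt]
        simp only [hs]
        omega
  refine ⟨f, ⟨fun i j h => ?_, fun i => ?_, fun i j hij h => ?_,
    fun i j k l hij hjk hkl _ hp => ?_⟩, ?_⟩
  · simp only [fabs] at h
    rcases tri i j with h' | h' | h'
    · have := Nmono _ _ h'
      omega
    · exact h'
    · have := Nmono _ _ h'
      omega
  · rw [fabs]
    have := Nlt i
    omega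
  · rw [fabs, fabs]
    have h3 := fs i
    have h4 := fs j
    have : AbsLt s i j := by unfold AbsLt; omega
    have := Nmono _ _ this
    omega
  · refine hg.no_pat i.succ j.succ k.succ l.succ (Fin.succ_lt_succ_iff.2 hij)
      (Fin.succ_lt_succ_iff.2 hjk) (Fin.succ_lt_succ_iff.2 hkl) ?_
    unfold Pat at *
    simpa only [flt, hs, sub_lt_sub_iff_right] using hp
  · funext i
    rw [rnk_congr hlt, rnk_eq_self hg.inj hg.bound]

/-! ### Descents -/

theorem cons_zero_ofFn {m : ℕ} (f : Fin m → ℤ) :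
    0 :: List.ofFn f = List.ofFn (Fin.cons 0 f : Fin (m + 1) → ℤ) := by
  rw [List.ofFn_succ]; simp

/-- The convention `w_0 = 0` for `B`-descents makes descents of `u` literally the descents of
`0 :: u`, with positions shifted by one. -/
theorem card_DesA_st (u : List ℤ) : (DesA (st (0 :: u))).card = (DesB u).card := by
  have hlen : (st (0 :: u)).length = u.length + 1 := by simp [st]
  have hlt : ∀ i j, i < u.length + 1 → j < u.length + 1 →
      ((st (0 :: u))[i]! < (st (0 :: u))[j]! ↔ (0 :: u)[i]! < (0 :: u)[j]!) := by
    intro i j hi hj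
    obtain ⟨f, hf⟩ : ∃ f : Fin (u.length + 1) → ℤ, 0 :: u = List.ofFn f :=
      ⟨_, (List.ofFn_get (0 :: u)).symm⟩
    rw [hf, st_ofFn, getElem!_pos _ _ (by simpa using hi), getElem!_pos _ _ (by simpa using hj),
      getElem!_pos _ _ (by simpa using hi), getElem!_pos _ _ (by simpa using hj)]
    simp only [List.getElem_ofFn]
    rw [← rnk_lt_iff f]
    omega
  have hcons : ∀ i, (if i = 0 then (0 : ℤ) else u[i - 1]!) = (0 :: u)[i]! := by
    rintro (_ | i) <;> simp
  symm
  refine Finset.card_bij (fun i _ => i + 1) ?_ (by simp) ?_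
  · intro i hi
    simp only [DesB, DesA, Finset.mem_filter, Finset.mem_range, hlen, hcons] at hi ⊢
    refine ⟨by omega, by omega, (hlt _ _ (by omega) (by omega)).2 ?_⟩
    simpa using hi.2
  · intro i hi
    simp only [DesB, DesA, Finset.mem_filter, Finset.mem_range, hlen, hcons] at hi ⊢
    obtain ⟨h1, h2, h3⟩ := hi
    obtain ⟨i, rfl⟩ := Nat.exists_eq_add_of_le' h2
    have := (hlt _ _ (by omega) (by omega)).1 h3
    exact ⟨i, ⟨by omega, by simpa using this⟩, rfl⟩

/-- `Σ_{w ∈ K(B_n)} t^{des_B(w)} = Σ_{w ∈ K(S_{n+1})} t^{des_A(w)}`. -/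
theorem descent_poly_B_eq_descent_poly_A (n : ℕ) :
    (∑ᶠ w ∈ {w : List ℤ | w.length = n ∧ IsSepB w},
        (X : Polynomial ℤ) ^ (DesB w).card) =
      ∑ᶠ w ∈ {w : List ℤ | w.length = n + 1 ∧ IsSepA w},
        (X : Polynomial ℤ) ^ (DesA w).card := by
  refine finsum_mem_eq_of_bijOn (fun u => st (0 :: u)) ⟨?_, ?_, ?_⟩ ?_
  · rintro u ⟨rfl, hu⟩
    obtain ⟨f, hf⟩ : ∃ f : Fin u.length → ℤ, u = List.ofFn f := ⟨_, (List.ofFn_get u).symm⟩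
    refine ⟨by simp [st], ?_⟩
    rw [hf, isSepB_ofFn] at hu
    simp only
    rw [hf, cons_zero_ofFn, st_ofFn, isSepA_ofFn]
    exact hu.mapsTo
  · rintro u ⟨rfl, hu⟩ v ⟨hl, hv⟩ h
    obtain ⟨f, hf⟩ : ∃ f : Fin u.length → ℤ, u = List.ofFn f := ⟨_, (List.ofFn_get u).symm⟩
    obtain ⟨g, hg⟩ : ∃ g : Fin u.length → ℤ, v = List.ofFn g := by
      rw [← hl]
      exact ⟨_, (List.ofFn_get v).symm⟩
    simp only at h
    rw [hf, hg, cons_zero_ofFn, cons_zero_ofFn, st_ofFn, st_ofFn] at h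
    rw [hf, isSepB_ofFn] at hu
    rw [hg, isSepB_ofFn] at hv
    rw [hf, hg]
    congr 1
    refine hu.injOn hv ?_
    funext i
    have := congrFun (List.ofFn_injective h) i
    simpa using this
  · rintro w ⟨hl, hw⟩
    obtain ⟨g, rfl⟩ : ∃ g : Fin (n + 1) → ℤ, w = List.ofFn g := by
      rw [← hl]
      exact ⟨_, (List.ofFn_get w).symm⟩
    obtain ⟨f, hf, hfg⟩ := ((isSepA_ofFn g).1 hw).surjOn
    refine ⟨List.ofFn f, ⟨by simp, (isSepB_ofFn f).2 hf⟩, ?_⟩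
    simp only
    rw [cons_zero_ofFn, st_ofFn, hfg]
  · intro u _
    rw [card_DesA_st]

end

end SepPaperFormal
end
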